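/- Let d, n ≥ 1, let Θ ⊆ ℝ^d be a nonempty closed convex set containing 0 with D := sup_{θ∈Θ} ‖θ‖_a finite, let γ be a norm on ℝ^d, let a ∈ (1,2] with conjugate a* = a/(a−1), and set G := sup{‖g‖_{a*} : γ(g) ≤ 1} and h(θ) := ‖θ‖_a²/(2(a−1)). Then there exists a stepsize α > 0 such that: for every sequence of convex functions F₁,…,Fₙ : ℝ^d → ℝ, every choice of iterates defined by θ₁ = 0 and θ_{i+1} ∈ argmin_{θ∈Θ} { ⟨g_i, θ⟩ + B_h(θ, θ_i)/α }, where g_i is a subgradient of F_i at θ_i with γ(g_i) ≤ 1, and every θ ∈ Θ, one has (1/n) Σ_{i=1}^n (F_i(θ_i) − F_i(θ)) ≤ D·G / √(n(a−1)). -/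

import Mathlib

/-!
The bound is the standard mirror descent regret bound, once `h = ‖·‖_a² / (2(a-1))` is known to be
1-strongly convex with respect to `‖·‖_a`, with this exact constant.

Strong convexity comes from the scalar two-point inequality (`two_point`)
`(x² + (p-1) y²)^(p/2) ≤ (|x+y|^p + |x-y|^p) / 2` for `1 < p ≤ 2`. Summing it over the coordinates and
applying Minkowski's inequality with exponent `2/p` gives the sharp two-uniform convexity
`2 (‖m‖² + (p-1) ‖u‖²) ≤ ‖m+u‖² + ‖m-u‖²` of `ℓ_p` (`lpN_two_uniform`). A dyadic argument turns this
midpoint inequality into `B_h(x, y) ≥ ‖x-y‖_a² / 2` (`breg_lower`).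

The optimality condition for the update, the three-point identity, Hölder and Young then bound the
`i`-th regret term by `(B_h(θ, θ_i) - B_h(θ, θ_{i+1})) / α + α G² / 2` (`regret_step`). The sum
telescopes, `B_h(θ, 0) ≤ D² / (2(a-1))`, and `α = D / (G √(n(a-1)))` balances the two terms. If
`D = 0` then `Θ = {0}` and every regret term vanishes.
-/

open Finset

/-- The ℓ_a norm on `Fin d → ℝ`. -/
noncomputable def lpN (d : ℕ) (a : ℝ) (x : Fin d → ℝ) : ℝ :=
  (∑ j, |x j| ^ a) ^ (1 / a)

/-- The distance generating function `h(θ) = ‖θ‖_a² / (2(a-1))`. -/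
noncomputable def dgf (d : ℕ) (a : ℝ) (θ : Fin d → ℝ) : ℝ :=
  (lpN d a θ) ^ 2 / (2 * (a - 1))

/-- The Bregman divergence `B_h(x,y) = h(x) - h(y) - ⟨∇h(y), x - y⟩`, where the
(Fréchet) derivative of `h` is given by `Dh`. -/
noncomputable def breg (d : ℕ) (a : ℝ)
    (Dh : (Fin d → ℝ) → ((Fin d → ℝ) →L[ℝ] ℝ)) (x y : Fin d → ℝ) : ℝ :=
  dgf d a x - dgf d a y - Dh y (x - y)

/-- `g` is a subgradient of `φ` at `θ`. -/
def IsSubgradientAt {d : ℕ} (φ : (Fin d → ℝ) → ℝ) (θ g : Fin d → ℝ) : Prop :=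
  ∀ θ', φ θ + ∑ j, g j * (θ' j - θ j) ≤ φ θ'

lemma lpN_nonneg (d : ℕ) (p : ℝ) (x : Fin d → ℝ) : 0 ≤ lpN d p x :=
  Real.rpow_nonneg (Finset.sum_nonneg fun _ _ => Real.rpow_nonneg (abs_nonneg _) _) _

/-! ### The two-point inequality -/

/-- The sign of the derivative needed in `two_point_unit`. It follows by differentiating once more:
`(1 + t) ^ (q - 1) + (1 - t) ^ (q - 1) ≥ 2`, since the product of the two terms is
`(1 - t²) ^ (q - 1) ≥ 1`. -/
lemma two_point_aux {q : ℝ} (hq0 : 0 < q) (hq1 : q ≤ 1) {t : ℝ} (ht : t ∈ Set.Icc (0:ℝ) 1) :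
    0 ≤ (1 + t) ^ q - (1 - t) ^ q - 2 * q * t := by
  have hmono : MonotoneOn (fun t : ℝ => (1 + t) ^ q - (1 - t) ^ q - 2 * q * t)
      (Set.Icc 0 1) := by
    have hder : ∀ x ∈ Set.Ioo (0:ℝ) 1,
        HasDerivAt (fun t : ℝ => (1 + t) ^ q - (1 - t) ^ q - 2 * q * t)
          (q * ((1 + x) ^ (q - 1) + (1 - x) ^ (q - 1) - 2)) x := by
      intro x hx
      have h1 := ((hasDerivAt_id x).const_add 1).rpow_const (p := q)
        (Or.inl (by simp only [id]; linarith [hx.1]))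
      have h2 := ((hasDerivAt_id x).const_sub 1).rpow_const (p := q)
        (Or.inl (by simp only [id]; linarith [hx.2]))
      have h3 := (hasDerivAt_id x).const_mul (2 * q)
      exact ((h1.sub h2).sub h3).congr_deriv (by simp only [id]; ring)
    apply monotoneOn_of_deriv_nonneg (convex_Icc 0 1)
    · refine ContinuousOn.sub (ContinuousOn.sub ?_ ?_) (by fun_prop)
      · exact ContinuousOn.rpow_const (by fun_prop) (fun _ _ => Or.inr hq0.le)
      · exact ContinuousOn.rpow_const (by fun_prop) (fun _ _ => Or.inr hq0.le)
    · rw [interior_Icc]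
      exact fun x hx => (hder x hx).differentiableAt.differentiableWithinAt
    · rw [interior_Icc]
      intro x hx
      rw [(hder x hx).deriv]
      have hA : 0 < (1 + x) ^ (q - 1) := Real.rpow_pos_of_pos (by linarith [hx.1]) _
      have hB : 0 < (1 - x) ^ (q - 1) := Real.rpow_pos_of_pos (by linarith [hx.2]) _
      have hAB : 1 ≤ (1 + x) ^ (q - 1) * (1 - x) ^ (q - 1) := by
        rw [← Real.mul_rpow (by linarith [hx.1]) (by linarith [hx.2])]
        exact Real.one_le_rpow_of_pos_of_le_one_of_nonpos
          (mul_pos (by linarith [hx.1]) (by linarith [hx.2]))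
          (by nlinarith [hx.1]) (by linarith)
      apply mul_nonneg hq0.le
      nlinarith [sq_nonneg ((1 + x) ^ (q - 1) - (1 - x) ^ (q - 1))]
  have := hmono (Set.left_mem_Icc.2 zero_le_one) ht ht.1
  simpa using this

/-- Second-order Taylor lower bound for `(1 + t) ^ p + (1 - t) ^ p`. -/
lemma two_point_unit {p : ℝ} (hp1 : 1 < p) (hp2 : p ≤ 2) {t : ℝ} (ht : t ∈ Set.Icc (0:ℝ) 1) :
    2 + p * (p - 1) * t ^ 2 ≤ (1 + t) ^ p + (1 - t) ^ p := by
  have hmono : MonotoneOn (fun t : ℝ => (1 + t) ^ p + (1 - t) ^ p - p * (p - 1) * t ^ 2)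
      (Set.Icc 0 1) := by
    have hder : ∀ x : ℝ,
        HasDerivAt (fun t : ℝ => (1 + t) ^ p + (1 - t) ^ p - p * (p - 1) * t ^ 2)
          (p * ((1 + x) ^ (p - 1) - (1 - x) ^ (p - 1) - 2 * (p - 1) * x)) x := by
      intro x
      have h1 := ((hasDerivAt_id x).const_add 1).rpow_const (p := p) (Or.inr hp1.le)
      have h2 := ((hasDerivAt_id x).const_sub 1).rpow_const (p := p) (Or.inr hp1.le)
      have h3 := ((hasDerivAt_id x).pow 2).const_mul (p * (p - 1))
      exact ((h1.add h2).sub h3).congr_deriv (by simp only [id]; push_cast; ring)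
    apply monotoneOn_of_deriv_nonneg (convex_Icc 0 1)
    · exact fun x _ => (hder x).continuousAt.continuousWithinAt
    · exact fun x _ => (hder x).differentiableAt.differentiableWithinAt
    · intro x hx
      rw [(hder x).deriv]
      exact mul_nonneg (by linarith)
        (two_point_aux (by linarith) (by linarith) (interior_subset hx))
  have := hmono (Set.left_mem_Icc.2 zero_le_one) ht ht.1
  simp at this
  linarith

/-- The two-point inequality when `0 ≤ y ≤ x`: scale to `x = 1`, then combine `two_point_unit` with
Bernoulli's inequality for the exponent `p / 2 ≤ 1`. -/
lemma two_point_le {p : ℝ} (hp1 : 1 < p) (hp2 : p ≤ 2) {x y : ℝ} (hy : 0 ≤ y) (hxy : y ≤ x) :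
    (x ^ 2 + (p - 1) * y ^ 2) ^ (p / 2) ≤ ((x + y) ^ p + (x - y) ^ p) / 2 := by
  rcases hy.trans hxy |>.eq_or_lt with h | hx
  · have : y = 0 := by linarith
    subst this; subst h
    simp [Real.zero_rpow (show p ≠ 0 by linarith), Real.zero_rpow (show p / 2 ≠ 0 by linarith)]
  obtain ⟨t, rfl⟩ : ∃ t, y = x * t := ⟨y / x, by field_simp⟩
  have ht0 : 0 ≤ t := nonneg_of_mul_nonneg_right hy hx
  have ht1 : t ≤ 1 := by
    by_contra! h
    nlinarith
  have e1 : x ^ 2 + (p - 1) * (x * t) ^ 2 = x ^ 2 * (1 + (p - 1) * t ^ 2) := by ring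
  have e2 : x + x * t = x * (1 + t) := by ring
  have e3 : x - x * t = x * (1 - t) := by ring
  have hpos : 0 ≤ (p - 1) * t ^ 2 := mul_nonneg (by linarith) (sq_nonneg t)
  have e4 : (x ^ 2) ^ (p / 2) = x ^ p := by
    rw [← Real.rpow_natCast, ← Real.rpow_mul hx.le]; congr 1; push_cast; ring
  rw [e1, e2, e3, Real.mul_rpow (sq_nonneg x) (by linarith), Real.mul_rpow hx.le (by linarith),
    Real.mul_rpow hx.le (by linarith), e4]
  have hb : (1 + (p - 1) * t ^ 2) ^ (p / 2) ≤ 1 + p / 2 * ((p - 1) * t ^ 2) :=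
    rpow_one_add_le_one_add_mul_self (by linarith) (by linarith) (by linarith)
  have hu := two_point_unit hp1 hp2 (t := t) ⟨ht0, ht1⟩
  have hxp : 0 ≤ x ^ p := Real.rpow_nonneg hx.le p
  have : (1 + (p - 1) * t ^ 2) ^ (p / 2) ≤ ((1 + t) ^ p + (1 - t) ^ p) / 2 := by linarith
  have := mul_le_mul_of_nonneg_left this hxp
  linarith

/-- The two-point (hypercontractive) inequality. The case `|x| < |y|` is reduced to the opposite one
by exchanging `x` and `y`, which only enlarges `x² + (p - 1) y²` because `p - 1 ≤ 1`. -/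
lemma two_point {p : ℝ} (hp1 : 1 < p) (hp2 : p ≤ 2) (x y : ℝ) :
    (x ^ 2 + (p - 1) * y ^ 2) ^ (p / 2) ≤ (|x + y| ^ p + |x - y| ^ p) / 2 := by
  have key : |x + y| ^ p + |x - y| ^ p = (|x| + |y|) ^ p + |(|x| - |y|)| ^ p := by
    rcases le_total 0 x with hx | hx <;> rcases le_total 0 y with hy | hy
    · rw [abs_of_nonneg hx, abs_of_nonneg hy, abs_of_nonneg (add_nonneg hx hy)]
    · rw [abs_of_nonneg hx, abs_of_nonpos hy, abs_of_nonneg (show 0 ≤ x - y by linarith), add_comm]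
      simp [sub_eq_add_neg]
    · rw [abs_of_nonpos hx, abs_of_nonneg hy, abs_of_nonpos (show x - y ≤ 0 by linarith), add_comm,
        ← abs_neg (x + y)]
      congr 2 <;> ring_nf
    · rw [abs_of_nonpos hx, abs_of_nonpos hy, abs_of_nonpos (add_nonpos hx hy), ← abs_neg (x - y)]
      congr 2 <;> ring_nf
  rw [key, ← sq_abs x, ← sq_abs y]
  have hX := abs_nonneg x
  have hY := abs_nonneg y
  generalize |x| = X at *
  generalize |y| = Y at *
  rcases le_total Y X with h | h
  · rw [abs_of_nonneg (sub_nonneg.2 h)]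
    exact two_point_le hp1 hp2 hY h
  · rw [abs_of_nonpos (sub_nonpos.2 h), neg_sub, add_comm X Y]
    refine le_trans ?_ (two_point_le hp1 hp2 hX h)
    have hXY : X ^ 2 ≤ Y ^ 2 := pow_le_pow_left₀ hX h 2
    apply Real.rpow_le_rpow
    · have := mul_nonneg (show 0 ≤ p - 1 by linarith) (sq_nonneg Y)
      positivity
    · nlinarith
    · linarith

/-- Triangle inequality in the plane with the `ℓ_r` norm, for the vectors `(u i, v i)`. -/
lemma minkowski_sum {ι : Type*} (s : Finset ι) {r : ℝ} (hr : 1 ≤ r) {u v : ι → ℝ}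
    (hu : ∀ i, 0 ≤ u i) (hv : ∀ i, 0 ≤ v i) :
    ((∑ i ∈ s, u i) ^ r + (∑ i ∈ s, v i) ^ r) ^ (1 / r) ≤
      ∑ i ∈ s, (u i ^ r + v i ^ r) ^ (1 / r) := by
  classical
  have hr0 : r ≠ 0 := by linarith
  induction s using Finset.induction_on with
  | empty => simp [Real.zero_rpow hr0, Real.zero_rpow (inv_ne_zero hr0)]
  | insert i s hi ih =>
    rw [Finset.sum_insert hi, Finset.sum_insert hi, Finset.sum_insert hi]
    have := Real.Lp_add_le_of_nonneg (Finset.univ : Finset (Fin 2))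
      (f := ![u i, v i]) (g := ![∑ i ∈ s, u i, ∑ i ∈ s, v i]) hr
      (by intro j _; fin_cases j <;> simp [hu, hv])
      (by intro j _; fin_cases j <;> simp [Finset.sum_nonneg, hu, hv])
    simp only [Fin.sum_univ_two, Matrix.cons_val_zero, Matrix.cons_val_one] at this
    linarith

/-! ### The norm `lpN` and its two-uniform convexity -/

lemma lpN_sq (d : ℕ) (p : ℝ) (x : Fin d → ℝ) :
    lpN d p x ^ 2 = (∑ j, |x j| ^ p) ^ (2 / p) := by
  rw [lpN, ← Real.rpow_natCast, ← Real.rpow_mul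
    (Finset.sum_nonneg fun _ _ => Real.rpow_nonneg (abs_nonneg _) _)]
  congr 1; push_cast; ring

lemma lpN_zero (d : ℕ) {p : ℝ} (hp : p ≠ 0) : lpN d p 0 = 0 := by
  simp [lpN, Real.zero_rpow hp, Real.zero_rpow (inv_ne_zero hp)]

lemma eq_zero_of_lpN {d : ℕ} {p : ℝ} (hp : p ≠ 0) {x : Fin d → ℝ} (h : lpN d p x = 0) :
    x = 0 := by
  have hnn : ∀ j ∈ (Finset.univ : Finset (Fin d)), 0 ≤ |x j| ^ p :=
    fun _ _ => Real.rpow_nonneg (abs_nonneg _) _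
  rw [lpN, Real.rpow_eq_zero (Finset.sum_nonneg hnn) (by simpa using hp),
    Finset.sum_eq_zero_iff_of_nonneg hnn] at h
  ext j
  have := h j (Finset.mem_univ j)
  rw [Real.rpow_eq_zero (abs_nonneg _) hp] at this
  simpa using this

lemma lpN_smul_sq {d : ℕ} {p : ℝ} (hp : p ≠ 0) (c : ℝ) (x : Fin d → ℝ) :
    lpN d p (c • x) ^ 2 = c ^ 2 * lpN d p x ^ 2 := by
  have hnn : 0 ≤ ∑ j, |x j| ^ p :=
    Finset.sum_nonneg fun _ _ => Real.rpow_nonneg (abs_nonneg _) _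
  have : lpN d p (c • x) = |c| * lpN d p x := by
    simp only [lpN, Pi.smul_apply, smul_eq_mul, abs_mul,
      Real.mul_rpow (abs_nonneg _) (abs_nonneg _), ← Finset.mul_sum]
    rw [Real.mul_rpow (Real.rpow_nonneg (abs_nonneg _) _) hnn, ← Real.rpow_mul (abs_nonneg _),
      mul_one_div_cancel hp, Real.rpow_one]
  rw [this, mul_pow, sq_abs]

lemma lpN_neg (d : ℕ) (p : ℝ) (x : Fin d → ℝ) : lpN d p (-x) = lpN d p x := by
  simp [lpN]

/-- Two-uniform convexity of `ℓ_p` with the sharp constant `p - 1`: sum `two_point` over the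
coordinates, bound the left side from below by Minkowski with exponent `2 / p`, and pass from
the `p`-mean to the quadratic mean by convexity of `t ↦ t ^ (2 / p)`. -/
lemma lpN_two_uniform {d : ℕ} {p : ℝ} (hp1 : 1 < p) (hp2 : p ≤ 2) (m u : Fin d → ℝ) :
    2 * (lpN d p m ^ 2 + (p - 1) * lpN d p u ^ 2) ≤
      lpN d p (m + u) ^ 2 + lpN d p (m - u) ^ 2 := by
  have hp0 : 0 < p := by linarith
  have hq : 0 ≤ p - 1 := by linarith
  have hr : 1 ≤ 2 / p := by rw [le_div_iff₀ hp0]; linarith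
  have hS : ∀ x : Fin d → ℝ, 0 ≤ ∑ j, |x j| ^ p := fun x =>
    Finset.sum_nonneg fun _ _ => Real.rpow_nonneg (abs_nonneg _) _
  have hsq : ∀ t : ℝ, (|t| ^ p) ^ (2 / p) = t ^ 2 := by
    intro t
    rw [← Real.rpow_mul (abs_nonneg _), mul_div_cancel₀ _ hp0.ne']
    rw [show (2:ℝ) = ((2:ℕ):ℝ) by norm_num, Real.rpow_natCast, sq_abs]
  have hc : ((p - 1) ^ (p / 2)) ^ (2 / p) = p - 1 := by
    rw [← Real.rpow_mul hq, show p / 2 * (2 / p) = 1 by field_simp, Real.rpow_one]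
  have hcn : 0 ≤ (p - 1) ^ (p / 2) := Real.rpow_nonneg hq _
  have hinv : 1 / (2 / p) = p / 2 := by field_simp
  have hM := minkowski_sum Finset.univ hr (u := fun j => |m j| ^ p)
    (v := fun j => (p - 1) ^ (p / 2) * |u j| ^ p)
    (fun _ => Real.rpow_nonneg (abs_nonneg _) _)
    (fun _ => mul_nonneg hcn (Real.rpow_nonneg (abs_nonneg _) _))
  simp only [← Finset.mul_sum, Real.mul_rpow hcn (hS u),
    Real.mul_rpow hcn (Real.rpow_nonneg (abs_nonneg _) _), hsq, hc, hinv, ← lpN_sq] at hM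
  have hT : ∑ j, (m j ^ 2 + (p - 1) * u j ^ 2) ^ (p / 2) ≤
      (∑ j, |(m + u) j| ^ p + ∑ j, |(m - u) j| ^ p) / 2 := by
    rw [← Finset.sum_add_distrib, Finset.sum_div]
    exact Finset.sum_le_sum fun j _ => two_point hp1 hp2 (m j) (u j)
  have hN : 0 ≤ lpN d p m ^ 2 + (p - 1) * lpN d p u ^ 2 := by positivity
  have h1 := Real.rpow_le_rpow (Real.rpow_nonneg hN _) (hM.trans hT) (zero_le_one.trans hr)
  rw [← Real.rpow_mul hN, show p / 2 * (2 / p) = 1 by field_simp, Real.rpow_one] at h1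
  have h2 := (convexOn_rpow hr).2 (Set.mem_Ici.2 (hS (m + u))) (Set.mem_Ici.2 (hS (m - u)))
    (show (0:ℝ) ≤ 1 / 2 by norm_num) (show (0:ℝ) ≤ 1 / 2 by norm_num) (by norm_num)
  simp only [smul_eq_mul, ← lpN_sq] at h2
  rw [← mul_add, one_div, inv_mul_eq_div] at h2
  linarith

/-! ### The Bregman divergence and the mirror descent step -/

/-- The function `h` is 1-strongly convex for `‖·‖_a`. Along the segment from `y` to `x`, the
excess `δ` of `h` over its tangent plus the quadratic term satisfies `2 δ(s / 2) ≤ δ(s)` by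
two-uniform convexity,
so `δ 1 ≥ 2 ^ k δ(2 ^ (-k))`, which tends to the derivative of `δ` at `0`, namely `0`. -/
lemma breg_lower {d : ℕ} {a : ℝ} (ha1 : 1 < a) (ha2 : a ≤ 2)
    {Dh : (Fin d → ℝ) → ((Fin d → ℝ) →L[ℝ] ℝ)} {y : Fin d → ℝ}
    (hDh : HasFDerivAt (dgf d a) (Dh y) y) (x : Fin d → ℝ) :
    lpN d a (x - y) ^ 2 / 2 ≤ breg d a Dh x y := by
  have ha0 : a ≠ 0 := by linarith
  have haq : 0 < a - 1 := by linarith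
  set v := x - y with hv
  set δ : ℝ → ℝ := fun s => dgf d a (y + s • v) - dgf d a y - s * Dh y v -
    s ^ 2 * (lpN d a v ^ 2 / 2) with hδ
  have hδ0 : δ 0 = 0 := by simp [hδ]
  have hhalf : ∀ s, 2 * δ (s / 2) ≤ δ s := by
    intro s
    have h := lpN_two_uniform ha1 ha2 (y + (s / 2) • v) ((s / 2) • v)
    rw [add_sub_cancel_right, add_assoc, ← add_smul, add_halves,
      lpN_smul_sq ha0 (s / 2) v] at h
    have h' : 2 * dgf d a (y + (s / 2) • v) + (s / 2) ^ 2 * lpN d a v ^ 2 ≤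
        dgf d a (y + s • v) + dgf d a y := by
      have e : 2 * dgf d a (y + (s / 2) • v) + (s / 2) ^ 2 * lpN d a v ^ 2 =
          2 * (lpN d a (y + (s / 2) • v) ^ 2 + (a - 1) * ((s / 2) ^ 2 * lpN d a v ^ 2)) /
            (2 * (a - 1)) := by
        simp only [dgf]; field_simp
      rw [e, dgf, dgf, ← add_div]
      exact div_le_div_of_nonneg_right h (by positivity)
    simp only [hδ]
    nlinarith
  have hpow : ∀ k : ℕ, ((1 / 2 : ℝ) ^ k)⁻¹ * δ ((1 / 2) ^ k) ≤ δ 1 := by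
    intro k
    induction k with
    | zero => simp
    | succ k ih =>
      refine le_trans ?_ ih
      have h := hhalf ((1 / 2) ^ k)
      have e : ((1 / 2 : ℝ) ^ (k + 1)) = (1 / 2) ^ k / 2 := by ring
      have hpos : (0:ℝ) < ((1 / 2) ^ k)⁻¹ := by positivity
      rw [e, inv_div, div_eq_mul_inv, mul_comm 2, mul_assoc]
      exact mul_le_mul_of_nonneg_left h hpos.le
  have hder : HasDerivAt δ 0 0 := by
    have hl : HasDerivAt (fun s : ℝ => y + s • v) v 0 := by
      simpa using ((hasDerivAt_id (0:ℝ)).smul_const v).const_add y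
    have h1 : HasDerivAt (fun s : ℝ => dgf d a (y + s • v)) (Dh y v) 0 := by
      have h0 : HasFDerivAt (dgf d a) (Dh y) (y + (0:ℝ) • v) := by simpa using hDh
      exact h0.comp_hasDerivAt (0:ℝ) hl
    have h2 := ((h1.sub_const (dgf d a y)).sub ((hasDerivAt_id (0:ℝ)).mul_const (Dh y v))).sub
      (((hasDerivAt_id (0:ℝ)).pow 2).mul_const (lpN d a v ^ 2 / 2))
    exact h2.congr_deriv (by simp)
  have hlim := hasDerivAt_iff_tendsto_slope_zero.1 hder
  have hseq : Filter.Tendsto (fun k : ℕ => (1 / 2 : ℝ) ^ k) Filter.atTop (nhdsWithin 0 {0}ᶜ) :=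
    tendsto_nhdsWithin_iff.2 ⟨tendsto_pow_atTop_nhds_zero_of_lt_one (by norm_num) (by norm_num),
      Filter.Eventually.of_forall fun k => by simp⟩
  have hpos : 0 ≤ δ 1 := by
    refine le_of_tendsto (hlim.comp hseq) (Filter.Eventually.of_forall fun k => ?_)
    simpa [hδ0] using hpow k
  simp only [hδ, one_smul, one_mul, one_pow] at hpos
  rw [breg, ← hv]
  have : y + v = x := by simp [hv]
  rw [this] at hpos
  linarith

lemma breg_zero {d : ℕ} {a : ℝ} (ha1 : 1 < a)
    {Dh : (Fin d → ℝ) → ((Fin d → ℝ) →L[ℝ] ℝ)}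
    (hDh : HasFDerivAt (dgf d a) (Dh 0) 0) (x : Fin d → ℝ) :
    breg d a Dh x 0 = lpN d a x ^ 2 / (2 * (a - 1)) := by
  have h0 : dgf d a 0 = 0 := by simp [dgf, lpN_zero d (show a ≠ 0 by linarith)]
  have hmin : IsLocalMin (dgf d a) 0 := Filter.Eventually.of_forall fun z => by
    rw [h0]
    exact div_nonneg (sq_nonneg _) (by linarith)
  rw [breg, hmin.hasFDerivAt_eq_zero hDh, h0]
  simp [dgf]

/-- First-order optimality of the mirror descent update, rewritten by the three-point identity for
the Bregman divergence. -/
lemma mirror_step {d : ℕ} {a : ℝ} {Θ : Set (Fin d → ℝ)} (hΘ : Convex ℝ Θ)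
    {Dh : (Fin d → ℝ) → ((Fin d → ℝ) →L[ℝ] ℝ)}
    {α : ℝ} {g y z : Fin d → ℝ} (hDh : HasFDerivAt (dgf d a) (Dh z) z) (hz : z ∈ Θ)
    (hmin : ∀ θ' ∈ Θ, (∑ j, g j * z j) + breg d a Dh z y / α ≤
      (∑ j, g j * θ' j) + breg d a Dh θ' y / α) {θ : Fin d → ℝ} (hθ : θ ∈ Θ) :
    ∑ j, g j * (z j - θ j) ≤
      (breg d a Dh θ y - breg d a Dh θ z - breg d a Dh z y) / α := by
  set L : (Fin d → ℝ) →L[ℝ] ℝ := ∑ j, g j • ContinuousLinearMap.proj (R := ℝ) j with hL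
  have hLa : ∀ x : Fin d → ℝ, L x = ∑ j, g j * x j := by
    intro x; simp [hL]
  have hder : HasFDerivAt (fun x => L x + breg d a Dh x y * α⁻¹)
      (L + α⁻¹ • (Dh z - Dh y)) z := by
    refine L.hasFDerivAt.add (HasFDerivAt.mul_const ?_ α⁻¹)
    refine (hDh.sub_const (dgf d a y)).sub ?_
    exact (Dh y).hasFDerivAt.comp z ((hasFDerivAt_id z).sub_const y)
  have hloc : IsLocalMinOn (fun x => L x + breg d a Dh x y * α⁻¹) Θ z := by
    refine IsMinOn.localize fun x hx => ?_
    have := hmin x hx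
    simpa only [Set.mem_ofPred_eq, hLa, div_eq_mul_inv] using this
  have h := hloc.hasFDerivWithinAt_nonneg hder.hasFDerivWithinAt
    (sub_mem_posTangentConeAt_of_segment_subset (hΘ.segment_subset hz hθ))
  have e1 : ∑ j, g j * (z j - θ j) = - L (θ - z) := by
    rw [hLa, ← Finset.sum_neg_distrib]
    exact Finset.sum_congr rfl fun j _ => by simp only [Pi.sub_apply]; ring
  have e2 : breg d a Dh θ y - breg d a Dh θ z - breg d a Dh z y = (Dh z - Dh y) (θ - z) := by
    have : θ - y = (θ - z) + (z - y) := by abel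
    simp only [breg, this, map_add, sub_apply]
    ring
  rw [e1, e2, div_eq_inv_mul]
  simp only [add_apply, smul_apply, smul_eq_mul] at h
  linarith

/-! ### Finiteness of the dual constant and the regret bound -/

/-- A norm `γ` is nonnegative and dominates the sup norm up to a constant: `γ` is convex, hence
continuous, and attains a positive minimum on the compact unit sphere. -/
lemma norm_le_mul {d : ℕ} {γ : (Fin d → ℝ) → ℝ}
    (hγ_tri : ∀ x y, γ (x + y) ≤ γ x + γ y)
    (hγ_smul : ∀ (c : ℝ) (x : Fin d → ℝ), γ (c • x) = |c| * γ x)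
    (hγ_pos : ∀ x, γ x = 0 → x = 0) :
    (∀ x, 0 ≤ γ x) ∧ ∃ C : ℝ, 0 ≤ C ∧ ∀ x, ‖x‖ ≤ C * γ x := by
  have hnn : ∀ x, 0 ≤ γ x := by
    intro x
    have h1 := hγ_tri x ((-1 : ℝ) • x)
    have h2 := hγ_smul 0 x
    have h3 := hγ_smul (-1) x
    simp only [neg_smul, one_smul, add_neg_cancel, zero_smul, abs_zero, zero_mul, abs_neg,
      abs_one, one_mul] at h1 h2 h3
    linarith
  refine ⟨hnn, ?_⟩
  have hconv : ConvexOn ℝ Set.univ γ := by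
    refine ⟨convex_univ, fun x _ y _ s t hs ht _ => ?_⟩
    have := hγ_tri (s • x) (t • y)
    rwa [hγ_smul, hγ_smul, abs_of_nonneg hs, abs_of_nonneg ht] at this
  have hcont : ContinuousOn γ Set.univ := hconv.continuousOn isOpen_univ
  rcases (Metric.sphere (0 : Fin d → ℝ) 1).eq_empty_or_nonempty with he | hne
  · refine ⟨0, le_rfl, fun x => ?_⟩
    by_contra! h
    rw [zero_mul] at h
    have : ‖x‖⁻¹ • x ∈ Metric.sphere (0 : Fin d → ℝ) 1 := by
      simp [norm_smul, h.ne']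
    rw [he] at this
    exact this
  · obtain ⟨z, hz, hzmin⟩ := (isCompact_sphere (0 : Fin d → ℝ) 1).exists_isMinOn hne
      (hcont.mono (Set.subset_univ _))
    have hzpos : 0 < γ z := (hnn z).lt_of_ne fun h => by
      rw [hγ_pos z h.symm] at hz
      simp at hz
    refine ⟨(γ z)⁻¹, (inv_pos.2 hzpos).le, fun x => ?_⟩
    rcases (norm_nonneg x).eq_or_lt with h | h
    · rw [← h]
      exact mul_nonneg (inv_pos.2 hzpos).le (hnn x)
    have hmem : ‖x‖⁻¹ • x ∈ Metric.sphere (0 : Fin d → ℝ) 1 := by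
      simp [norm_smul, h.ne']
    have hle : γ z ≤ γ (‖x‖⁻¹ • x) := hzmin hmem
    rw [hγ_smul, abs_of_pos (inv_pos.2 h), inv_mul_eq_div, le_div_iff₀ h] at hle
    rwa [inv_mul_eq_div, le_div_iff₀ hzpos, mul_comm]

/-- The constant `G` is a genuine finite supremum, and it is positive. -/
lemma dual_bound {d : ℕ} (hd : 1 ≤ d) {γ : (Fin d → ℝ) → ℝ}
    (hγ_tri : ∀ x y, γ (x + y) ≤ γ x + γ y)
    (hγ_smul : ∀ (c : ℝ) (x : Fin d → ℝ), γ (c • x) = |c| * γ x)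
    (hγ_pos : ∀ x, γ x = 0 → x = 0) {q : ℝ} (hq : 0 < q) :
    (∀ g, γ g ≤ 1 →
      lpN d q g ≤ sSup {t : ℝ | ∃ g' : Fin d → ℝ, γ g' ≤ 1 ∧ t = lpN d q g'}) ∧
    0 < sSup {t : ℝ | ∃ g' : Fin d → ℝ, γ g' ≤ 1 ∧ t = lpN d q g'} := by
  obtain ⟨hnn, C, hC, hbd⟩ := norm_le_mul hγ_tri hγ_smul hγ_pos
  have hbdd : BddAbove {t : ℝ | ∃ g' : Fin d → ℝ, γ g' ≤ 1 ∧ t = lpN d q g'} := by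
    refine ⟨(∑ _j : Fin d, C ^ q) ^ (1 / q), ?_⟩
    rintro t ⟨g, hg, rfl⟩
    refine Real.rpow_le_rpow (Finset.sum_nonneg fun _ _ => Real.rpow_nonneg (abs_nonneg _) _)
      (Finset.sum_le_sum fun j _ => Real.rpow_le_rpow (abs_nonneg _) ?_ hq.le) (by positivity)
    calc |g j| ≤ ‖g‖ := norm_le_pi_norm g j
      _ ≤ C * γ g := hbd g
      _ ≤ C := by nlinarith
  have hle : ∀ g, γ g ≤ 1 →
      lpN d q g ≤ sSup {t : ℝ | ∃ g' : Fin d → ℝ, γ g' ≤ 1 ∧ t = lpN d q g'} :=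
    fun g hg => le_csSup hbdd ⟨g, hg, rfl⟩
  refine ⟨hle, ?_⟩
  have he : (fun _ : Fin d => (1:ℝ)) ≠ 0 := fun h => by
    simpa using congrFun h ⟨0, hd⟩
  have hγe : 0 < γ fun _ => 1 := (hnn _).lt_of_ne fun h => he (hγ_pos _ h.symm)
  have hg1 : γ ((γ fun _ => 1)⁻¹ • fun _ => (1:ℝ)) ≤ 1 := by
    rw [hγ_smul, abs_of_pos (inv_pos.2 hγe), inv_mul_cancel₀ hγe.ne']
  refine lt_of_lt_of_le ((lpN_nonneg d q _).lt_of_ne fun h => ?_) (hle _ hg1)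
  exact smul_ne_zero (inv_ne_zero hγe.ne') he (eq_zero_of_lpN (ne_of_gt hq) h.symm)

/-- One step of the regret bound: Hölder and Young absorb `⟨g, y - z⟩` into `α G² / 2` and the
divergence `B_h(z, y)`, which `mirror_step` supplies with the opposite sign. -/
lemma regret_step {d : ℕ} {a : ℝ} (ha1 : 1 < a) (ha2 : a ≤ 2)
    {Θ : Set (Fin d → ℝ)} (hΘ : Convex ℝ Θ)
    {Dh : (Fin d → ℝ) → ((Fin d → ℝ) →L[ℝ] ℝ)} (hDh : ∀ y, HasFDerivAt (dgf d a) (Dh y) y)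
    {α G : ℝ} (hα : 0 < α) {g y z : Fin d → ℝ}
    (hG : lpN d (a / (a - 1)) g ≤ G) (hz : z ∈ Θ)
    (hmin : ∀ θ' ∈ Θ, (∑ j, g j * z j) + breg d a Dh z y / α ≤
      (∑ j, g j * θ' j) + breg d a Dh θ' y / α) {θ : Fin d → ℝ} (hθ : θ ∈ Θ) :
    ∑ j, g j * (y j - θ j) ≤
      (breg d a Dh θ y - breg d a Dh θ z) / α + α * G ^ 2 / 2 := by
  have h1 := mirror_step hΘ (hDh z) hz hmin hθ
  have h2 := breg_lower ha1 ha2 (hDh y) z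
  have hH : ∑ j, g j * (y j - z j) ≤ G * lpN d a (z - y) := by
    have hconj : (a / (a - 1)).HolderConjugate a :=
      (Real.HolderConjugate.conjExponent ha1).symm
    have := Real.inner_le_Lp_mul_Lq Finset.univ g (y - z) hconj
    rw [← lpN_neg, neg_sub]
    exact this.trans (mul_le_mul_of_nonneg_right hG (lpN_nonneg d a (y - z)))
  have hY : G * lpN d a (z - y) ≤ α * G ^ 2 / 2 + lpN d a (z - y) ^ 2 / 2 / α := by
    have : 0 ≤ (α * G - lpN d a (z - y)) ^ 2 / (2 * α) := by positivity
    have e : (α * G - lpN d a (z - y)) ^ 2 / (2 * α) =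
        α * G ^ 2 / 2 + lpN d a (z - y) ^ 2 / 2 / α - G * lpN d a (z - y) := by
      field_simp; ring
    linarith
  have hB : lpN d a (z - y) ^ 2 / 2 / α ≤ breg d a Dh z y / α :=
    div_le_div_of_nonneg_right h2 hα.le
  have es : ∑ j, g j * (y j - θ j) = ∑ j, g j * (y j - z j) + ∑ j, g j * (z j - θ j) := by
    rw [← Finset.sum_add_distrib]
    exact Finset.sum_congr rfl fun j _ => by ring
  rw [sub_div] at h1
  linarith

theorem statement14 (d n : ℕ) (hd : 1 ≤ d) (hn : 1 ≤ n)
    (Θ : Set (Fin d → ℝ)) (hΘne : Θ.Nonempty) (hΘcl : IsClosed Θ)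
    (hΘconv : Convex ℝ Θ) (h0 : (0 : Fin d → ℝ) ∈ Θ)
    (γ : (Fin d → ℝ) → ℝ)
    (hγ_tri : ∀ x y, γ (x + y) ≤ γ x + γ y)
    (hγ_smul : ∀ (c : ℝ) (x : Fin d → ℝ), γ (c • x) = |c| * γ x)
    (hγ_pos : ∀ x, γ x = 0 → x = 0)
    (a : ℝ) (ha1 : 1 < a) (ha2 : a ≤ 2)
    (hD : BddAbove (lpN d a '' Θ)) :
    ∃ α : ℝ, 0 < α ∧
      ∀ F : Fin n → (Fin d → ℝ) → ℝ,
        (∀ i, ConvexOn ℝ Set.univ (F i)) →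
      ∀ Dh : (Fin d → ℝ) → ((Fin d → ℝ) →L[ℝ] ℝ),
        (∀ y, HasFDerivAt (dgf d a) (Dh y) y) →
      ∀ (θs : ℕ → Fin d → ℝ) (g : Fin n → Fin d → ℝ),
        θs 0 = 0 →
        (∀ i : Fin n,
          IsSubgradientAt (F i) (θs i.val) (g i) ∧ γ (g i) ≤ 1 ∧
          θs (i.val + 1) ∈ Θ ∧
          ∀ θ' ∈ Θ,
            (∑ j, g i j * θs (i.val + 1) j) +
              breg d a Dh (θs (i.val + 1)) (θs i.val) / α ≤
            (∑ j, g i j * θ' j) + breg d a Dh θ' (θs i.val) / α) →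
      ∀ θ ∈ Θ,
        (1 / (n : ℝ)) * ∑ i : Fin n, (F i (θs i.val) - F i θ) ≤
          sSup (lpN d a '' Θ) *
            sSup {t : ℝ | ∃ g' : Fin d → ℝ, γ g' ≤ 1 ∧ t = lpN d (a / (a - 1)) g'} /
            Real.sqrt (n * (a - 1)) := by
  have ha0 : a ≠ 0 := by linarith
  have haq : 0 < a - 1 := by linarith
  have hnpos : (0:ℝ) < n := by exact_mod_cast hn
  obtain ⟨hGle, hGpos⟩ := dual_bound hd hγ_tri hγ_smul hγ_pos
    (q := a / (a - 1)) (div_pos (by linarith) haq)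
  set G := sSup {t : ℝ | ∃ g' : Fin d → ℝ, γ g' ≤ 1 ∧ t = lpN d (a / (a - 1)) g'}
  have hDle : ∀ x ∈ Θ, lpN d a x ≤ sSup (lpN d a '' Θ) :=
    fun x hx => le_csSup hD (Set.mem_image_of_mem _ hx)
  set D := sSup (lpN d a '' Θ)
  set s := Real.sqrt (n * (a - 1))
  have hs : 0 < s := Real.sqrt_pos.2 (mul_pos hnpos haq)
  have hs2 : s ^ 2 = n * (a - 1) := Real.sq_sqrt (mul_pos hnpos haq).le
  have hD0 : 0 ≤ D := (lpN_nonneg d a 0).trans (hDle 0 h0)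
  rcases hD0.eq_or_lt with hDz | hDpos
  · -- Here `Θ = {0}`, so every iterate equals the comparator.
    have hΘ0 : ∀ x ∈ Θ, x = 0 := fun x hx =>
      eq_zero_of_lpN ha0 (le_antisymm ((hDle x hx).trans hDz.symm.le) (lpN_nonneg d a x))
    refine ⟨1, one_pos, fun F _ Dh _ θs g hθ0 hit θ hθ => ?_⟩
    have hall : ∀ i : Fin n, θs i.val = 0 := by
      rintro ⟨i, hi⟩
      cases i with
      | zero => exact hθ0
      | succ k => exact hΘ0 _ (hit ⟨k, by omega⟩).2.2.1
    simp [hall, hΘ0 θ hθ, ← hDz]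
  · refine ⟨D / (G * s), by positivity, fun F _ Dh hDh θs g hθ0 hit θ hθ => ?_⟩
    set α := D / (G * s) with hαdef
    have hα : 0 < α := by positivity
    have hterm : ∀ i : Fin n, F i (θs i.val) - F i θ ≤
        (breg d a Dh θ (θs i.val) - breg d a Dh θ (θs (i.val + 1))) / α + α * G ^ 2 / 2 := by
      intro i
      obtain ⟨hsub, hγi, hmem, hmin⟩ := hit i
      have h1 := regret_step ha1 ha2 hΘconv hDh hα (hGle _ hγi) hmem hmin hθ
      have h2 := hsub θ
      have e : ∑ j, g i j * (θs i.val j - θ j) = - ∑ j, g i j * (θ j - θs i.val j) := by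
        rw [← Finset.sum_neg_distrib]
        exact Finset.sum_congr rfl fun j _ => by ring
      linarith
    have hsum : ∑ i : Fin n, (F i (θs i.val) - F i θ) ≤
        (breg d a Dh θ (θs 0) - breg d a Dh θ (θs n)) / α + n * (α * G ^ 2 / 2) := by
      refine (Finset.sum_le_sum fun i _ => hterm i).trans_eq ?_
      rw [Fin.sum_univ_eq_sum_range (fun k =>
        (breg d a Dh θ (θs k) - breg d a Dh θ (θs (k + 1))) / α + α * G ^ 2 / 2) n,
        Finset.sum_add_distrib, ← Finset.sum_div,
        Finset.sum_range_sub' (fun k => breg d a Dh θ (θs k))]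
      simp
    have hlast : 0 ≤ breg d a Dh θ (θs n) :=
      (by positivity : 0 ≤ lpN d a (θ - θs n) ^ 2 / 2).trans (breg_lower ha1 ha2 (hDh _) θ)
    have hfirst : breg d a Dh θ (θs 0) ≤ D ^ 2 / (2 * (a - 1)) := by
      rw [hθ0, breg_zero ha1 (hDh 0)]
      exact div_le_div_of_nonneg_right
        (pow_le_pow_left₀ (lpN_nonneg d a θ) (hDle θ hθ) 2) (by positivity)
    have hfrac : (breg d a Dh θ (θs 0) - breg d a Dh θ (θs n)) / α ≤
        D ^ 2 / (2 * (a - 1)) / α := div_le_div_of_nonneg_right (by linarith) hα.le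
    -- The chosen stepsize balances the two terms, each contributing `n * D * G / (2 * s)`.
    have hT1 : D ^ 2 / (2 * (a - 1)) / α = n * (D * G / s) / 2 := by
      rw [hαdef]; field_simp; linarith
    have hT2 : n * (α * G ^ 2 / 2) = n * (D * G / s) / 2 := by
      rw [hαdef]; field_simp
    have : ∑ i : Fin n, (F i (θs i.val) - F i θ) ≤ n * (D * G / s) := by linarith
    rw [one_div, inv_mul_eq_div, div_le_iff₀ hnpos, mul_comm]
    exact this
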